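/- Let G be a finite simple undirected graph containing a split gadget S_k (k ≥ 2) none of whose vertices is s or t. In any non-transitive st-orientation of G: if the input edge of S_k is oriented entering S_k, then all k output edges of S_k are oriented exiting S_k; and if the input edge of S_k is oriented exiting S_k, then all k output edges of S_k are oriented entering S_k. -/

import Mathlib

variable {V : Type*}

/-- `D` is an orientation of `G`: every directed edge lies on an edge of `G`,
and every edge of `G` receives exactly one of the two possible directions. -/
def IsOrientation (G : SimpleGraph V) (D : V → V → Prop) : Prop :=
  (∀ u v, D u v → G.Adj u v) ∧ ∀ u v, G.Adj u v → (D u v ↔ ¬ D v u)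

/-- A digraph is acyclic if it has no directed cycle. -/
def DigraphAcyclic (D : V → V → Prop) : Prop :=
  ∀ v, ¬ Relation.TransGen D v v

/-- An st-orientation: an acyclic orientation with unique source `s` and unique sink `t`. -/
def IsSTOrientation (G : SimpleGraph V) (D : V → V → Prop) (s t : V) : Prop :=
  IsOrientation G D ∧ DigraphAcyclic D ∧
    (∀ u, ¬ D u s) ∧ (∀ v, (∀ u, ¬ D u v) → v = s) ∧
    (∀ u, ¬ D t u) ∧ (∀ v, (∀ u, ¬ D v u) → v = t)

/-- A directed edge `(u,v)` is transitive if there is a directed path from `u` to `v`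
of length at least 2. -/
def TransEdge (D : V → V → Prop) (u v : V) : Prop :=
  D u v ∧ ∃ w, D u w ∧ Relation.TransGen D w v

/-- A non-transitive st-orientation: an st-orientation with no transitive edge. -/
def IsNonTransSTOrientation (G : SimpleGraph V) (D : V → V → Prop) (s t : V) : Prop :=
  IsSTOrientation G D s t ∧ ∀ u v, ¬ TransEdge D u v

/-- A fork gadget in `G`: six vertices `v, m1, m2, x, w, z` with the prescribed internal
edges, three boundary edges `e1 = {a,v}`, `e9 = {w,b}`, `e10 = {z,c}` to outside vertices
`a, b, c`, and no other incident edges at the six fork vertices. -/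
structure ForkGadget (G : SimpleGraph V) where
  a : V
  v : V
  m1 : V
  m2 : V
  x : V
  w : V
  z : V
  b : V
  c : V
  distinct : List.Pairwise (· ≠ ·) [v, m1, m2, x, w, z]
  a_outside : a ∉ [v, m1, m2, x, w, z]
  b_outside : b ∉ [v, m1, m2, x, w, z]
  c_outside : c ∉ [v, m1, m2, x, w, z]
  nbr_v : ∀ u, G.Adj v u ↔ u = a ∨ u = m1 ∨ u = x ∨ u = m2
  nbr_m1 : ∀ u, G.Adj m1 u ↔ u = v ∨ u = w
  nbr_m2 : ∀ u, G.Adj m2 u ↔ u = v ∨ u = z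
  nbr_x : ∀ u, G.Adj x u ↔ u = v ∨ u = w ∨ u = z
  nbr_w : ∀ u, G.Adj w u ↔ u = m1 ∨ u = x ∨ u = b
  nbr_z : ∀ u, G.Adj z u ↔ u = m2 ∨ u = x ∨ u = c

/-- The six fork vertices of a fork gadget. -/
def ForkGadget.verts {G : SimpleGraph V} (F : ForkGadget G) : Set V :=
  {F.v, F.m1, F.m2, F.x, F.w, F.z}

/-- The vertex set of a chain of `k - 1` fork gadgets `fork 0, …, fork (k-2)`. -/
def forkChainVerts {G : SimpleGraph V} (fork : ℕ → ForkGadget G) (k : ℕ) : Set V :=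
  {u | ∃ i, i < k - 1 ∧ u ∈ (fork i).verts}

/-- A split gadget `S_k` in `G`: a chain of `k - 1` vertex-disjoint fork gadgets
`fork 0, …, fork (k-2)` where, for each consecutive pair, the boundary edge `e9` of
`fork i` is identified with the boundary edge `e1` of `fork (i+1)`. The input edge is
`e1` of `fork 0`; the `k` output edges are the edges `e10` of each fork together with the
edge `e9` of the last fork, all joining the gadget to the rest of `G`. -/
structure SplitGadget (G : SimpleGraph V) (k : ℕ) where
  fork : ℕ → ForkGadget G
  chain : ∀ i, i + 1 < k - 1 →
    (fork i).b = (fork (i + 1)).v ∧ (fork (i + 1)).a = (fork i).w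
  disjoint : ∀ i j, i < k - 1 → j < k - 1 → i ≠ j →
    Disjoint (fork i).verts (fork j).verts
  input_outside : (fork 0).a ∉ forkChainVerts fork k
  output_c_outside : ∀ i, i < k - 1 → (fork i).c ∉ forkChainVerts fork k
  output_b_outside : (fork (k - 2)).b ∉ forkChainVerts fork k

theorem quad_aux {V : Type*} (G : SimpleGraph V) (s t : V) (D : V → V → Prop)
    (hD : IsNonTransSTOrientation G D s t) (p q r x : V)
    (hq : ∀ u, G.Adj q u ↔ u = p ∨ u = r) (hqs : q ≠ s) (hqt : q ≠ t)
    (hxp : G.Adj x p) (hxr : G.Adj x r) :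
    (D p q ∧ D q r ∧ D p x ∧ D x r) ∨ (D r q ∧ D q p ∧ D x p ∧ D r x) := by
  obtain ⟨⟨⟨hadj, hor⟩, hac, -, hsrc, -, hsnk⟩, hnt⟩ := hD
  have c4 : ∀ a b c d, D a b → D b c → D c d → ¬ D d a := fun a b c d h1 h2 h3 h4 =>
    hac a (((Relation.TransGen.single h1).tail h2).tail h3 |>.tail h4)
  have t4 : ∀ a b c d, D a b → D b c → D c d → ¬ D a d := fun a b c d h1 h2 h3 h4 =>
    hnt a d ⟨h4, b, h1, (Relation.TransGen.single h2).tail h3⟩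
  have h1 := hor _ _ hxp
  have h2 := hor _ _ hxr
  have h3 := hor _ _ ((hq p).2 (Or.inl rfl))
  have h4 := hor _ _ ((hq r).2 (Or.inr rfl))
  have h5 : D p q ∨ D r q := by
    by_contra hc
    push Not at hc
    refine hqs (hsrc q fun u hu => ?_)
    rcases (hq u).1 (hadj _ _ hu).symm with rfl | rfl
    exacts [hc.1 hu, hc.2 hu]
  have h6 : D q p ∨ D q r := by
    by_contra hc
    push Not at hc
    refine hqt (hsnk q fun u hu => ?_)
    rcases (hq u).1 (hadj _ _ hu) with rfl | rfl
    exacts [hc.1 hu, hc.2 hu]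
  have := c4 p q r x
  have := c4 r q p x
  have := t4 p q r x
  have := t4 r q p x
  have := t4 x p q r
  have := t4 x r q p
  clear c4 t4 hac hnt hsrc hsnk hadj hor hq
  by_cases D p q <;> by_cases D q r <;> by_cases D p x <;> by_cases D x r <;> simp_all

theorem fork_aux {V : Type*} (G : SimpleGraph V) (s t : V) (D : V → V → Prop)
    (hD : IsNonTransSTOrientation G D s t) (F : ForkGadget G)
    (hs : s ∉ F.verts) (ht : t ∉ F.verts) :
    (D F.a F.v → D F.z F.c ∧ D F.w F.b) ∧ (D F.v F.a → D F.c F.z ∧ D F.b F.w) := by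
  simp only [ForkGadget.verts, Set.mem_insert_iff, Set.mem_singleton_iff, not_or] at hs ht
  obtain ⟨s1, s2, s3, s4, s5, s6⟩ := hs
  obtain ⟨t1, t2, t3, t4, t5, t6⟩ := ht
  have xv : G.Adj F.x F.v := (F.nbr_x _).2 (by simp)
  have xw : G.Adj F.x F.w := (F.nbr_x _).2 (by simp)
  have xz : G.Adj F.x F.z := (F.nbr_x _).2 (by simp)
  have q1 := quad_aux G s t D hD F.v F.m1 F.w F.x F.nbr_m1 (Ne.symm s2) (Ne.symm t2) xv xw
  have q2 := quad_aux G s t D hD F.v F.m2 F.z F.x F.nbr_m2 (Ne.symm s3) (Ne.symm t3) xv xz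
  obtain ⟨⟨⟨hadj, hor⟩, -, -, hsrc, -, hsnk⟩, -⟩ := hD
  have asym : ∀ a b, D a b → ¬ D b a := fun a b h => (hor a b (hadj _ _ h)).1 h
  have hin : ∀ y, s ≠ y → ∃ u, D u y := fun y hy => by
    by_contra hc
    push Not at hc
    exact hy (hsrc y hc).symm
  have hout : ∀ y, t ≠ y → ∃ u, D y u := fun y hy => by
    by_contra hc
    push Not at hc
    exact hy (hsnk y hc).symm
  have av := hor _ _ ((F.nbr_v F.a).2 (by simp))
  have iv : D F.a F.v ∨ D F.m1 F.v ∨ D F.x F.v ∨ D F.m2 F.v := by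
    obtain ⟨u, hu⟩ := hin _ s1
    rcases (F.nbr_v u).1 (hadj _ _ hu).symm with rfl | rfl | rfl | rfl <;> simp only [hu, true_or, or_true]
  have ov : D F.v F.a ∨ D F.v F.m1 ∨ D F.v F.x ∨ D F.v F.m2 := by
    obtain ⟨u, hu⟩ := hout _ t1
    rcases (F.nbr_v u).1 (hadj _ _ hu) with rfl | rfl | rfl | rfl <;> simp only [hu, true_or, or_true]
  have iw : D F.m1 F.w ∨ D F.x F.w ∨ D F.b F.w := by
    obtain ⟨u, hu⟩ := hin _ s5
    rcases (F.nbr_w u).1 (hadj _ _ hu).symm with rfl | rfl | rfl <;> simp only [hu, true_or, or_true]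
  have ow : D F.w F.m1 ∨ D F.w F.x ∨ D F.w F.b := by
    obtain ⟨u, hu⟩ := hout _ t5
    rcases (F.nbr_w u).1 (hadj _ _ hu) with rfl | rfl | rfl <;> simp only [hu, true_or, or_true]
  have iz : D F.m2 F.z ∨ D F.x F.z ∨ D F.c F.z := by
    obtain ⟨u, hu⟩ := hin _ s6
    rcases (F.nbr_z u).1 (hadj _ _ hu).symm with rfl | rfl | rfl <;> simp only [hu, true_or, or_true]
  have oz : D F.z F.m2 ∨ D F.z F.x ∨ D F.z F.c := by
    obtain ⟨u, hu⟩ := hout _ t6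
    rcases (F.nbr_z u).1 (hadj _ _ hu) with rfl | rfl | rfl <;> simp only [hu, true_or, or_true]
  grind

/-- In any non-transitive st-orientation of a graph containing a split gadget `S_k`
(`k ≥ 2`) avoiding `s` and `t`: if the input edge enters the gadget then all `k` output
edges exit it, and if the input edge exits the gadget then all `k` output edges enter
it. -/
theorem stmt9 {V : Type*} (G : SimpleGraph V) (s t : V) (hst : s ≠ t)
    (k : ℕ) (hk : 2 ≤ k) (S : SplitGadget G k)
    (hs : s ∉ forkChainVerts S.fork k) (ht : t ∉ forkChainVerts S.fork k)
    (D : V → V → Prop) (hD : IsNonTransSTOrientation G D s t) :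
    (D (S.fork 0).a (S.fork 0).v →
      (∀ i, i < k - 1 → D (S.fork i).z (S.fork i).c) ∧
      D (S.fork (k - 2)).w (S.fork (k - 2)).b) ∧
    (D (S.fork 0).v (S.fork 0).a →
      (∀ i, i < k - 1 → D (S.fork i).c (S.fork i).z) ∧
      D (S.fork (k - 2)).b (S.fork (k - 2)).w) := by
  have key : ∀ i, i < k - 1 → _ := fun i hi =>
    fork_aux G s t D hD (S.fork i) (fun h => hs ⟨i, hi, h⟩) (fun h => ht ⟨i, hi, h⟩)
  have hlast : k - 2 < k - 1 := by omega
  constructor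
  · intro h0
    have hall : ∀ i, i < k - 1 → D (S.fork i).a (S.fork i).v := by
      intro i
      induction i with
      | zero => intro _; exact h0
      | succ n ih =>
        intro hn
        have h := ((key n (by omega)).1 (ih (by omega))).2
        obtain ⟨e1, e2⟩ := S.chain n hn
        rw [e2, ← e1]
        exact h
    exact ⟨fun i hi => ((key i hi).1 (hall i hi)).1, ((key _ hlast).1 (hall _ hlast)).2⟩
  · intro h0
    have hall : ∀ i, i < k - 1 → D (S.fork i).v (S.fork i).a := by
      intro i
      induction i with
      | zero => intro _; exact h0
      | succ n ih =>
        intro hn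
        have h := ((key n (by omega)).2 (ih (by omega))).2
        obtain ⟨e1, e2⟩ := S.chain n hn
        rw [e2, ← e1]
        exact h
    exact ⟨fun i hi => ((key i hi).2 (hall i hi)).1, ((key _ hlast).2 (hall _ hlast)).2⟩
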